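/- arXiv:1204.4967 — 2 statements merged into one kernel-verified Lean document; each statement's English description precedes it below -/
import Mathlib

section
/- Let R be a principal ideal domain with field of fractions K. Then every rational map φ of degree d ≥ 2 over K admits an R-minimal model, i.e., there exist (λ,A) ∈ K^× × GL₂(K) such that [F,G]^{(λ,A)} has coefficients in R and its resultant generates the ideal Res_R([φ]). -/
noncomputable section

/-- Determinant of the Sylvester matrix of two polynomials, given by coefficient
sequences `p` (regarded as having degree `m`) and `q` (regarded as having degree `n`). -/
def sylRes {K : Type*} [CommRing K] (m n : ℕ) (p q : ℕ → K) : K :=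
  Matrix.det (Matrix.of fun i j : Fin (n + m) =>
    if (i : ℕ) < n then
      (if (i : ℕ) ≤ (j : ℕ) ∧ (j : ℕ) ≤ (i : ℕ) + m then p (m - ((j : ℕ) - (i : ℕ))) else 0)
    else
      (if (i : ℕ) - n ≤ (j : ℕ) ∧ (j : ℕ) ≤ ((i : ℕ) - n) + n then
        q (n - ((j : ℕ) - ((i : ℕ) - n))) else 0))

/-- The binary form of degree `d` with coefficient sequence `f`
(`f i` is the coefficient of `X^i Y^(d-i)`). -/
def toForm {K : Type*} [CommRing K] (d : ℕ) (f : ℕ → K) : MvPolynomial (Fin 2) K :=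
  ∑ i ∈ Finset.range (d + 1),
    MvPolynomial.C (f i) * MvPolynomial.X 0 ^ i * MvPolynomial.X 1 ^ (d - i)

/-- Substitution `X ↦ A₀₀ X + A₀₁ Y`, `Y ↦ A₁₀ X + A₁₁ Y`. -/
def substMat {K : Type*} [CommRing K] (A : Matrix (Fin 2) (Fin 2) K)
    (P : MvPolynomial (Fin 2) K) : MvPolynomial (Fin 2) K :=
  MvPolynomial.eval₂ MvPolynomial.C
    (fun k => MvPolynomial.C (A k 0) * MvPolynomial.X 0 + MvPolynomial.C (A k 1) * MvPolynomial.X 1) P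

/-- Coefficient sequence of a binary form of degree `d`. -/
def coeffVec {K : Type*} [CommRing K] (d : ℕ) (P : MvPolynomial (Fin 2) K) : ℕ → K :=
  fun i => MvPolynomial.coeff (Finsupp.single (0 : Fin 2) i + Finsupp.single (1 : Fin 2) (d - i)) P

/-- Coefficients of `F_A = δ·(F∘A) − β·(G∘A)` for `A = [[α,β],[γ,δ]]`. -/
def FA {K : Type*} [CommRing K] (d : ℕ) (f g : ℕ → K) (A : Matrix (Fin 2) (Fin 2) K) : ℕ → K :=
  coeffVec d (MvPolynomial.C (A 1 1) * substMat A (toForm d f) -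
    MvPolynomial.C (A 0 1) * substMat A (toForm d g))

/-- Coefficients of `G_A = −γ·(F∘A) + α·(G∘A)` for `A = [[α,β],[γ,δ]]`. -/
def GA {K : Type*} [CommRing K] (d : ℕ) (f g : ℕ → K) (A : Matrix (Fin 2) (Fin 2) K) : ℕ → K :=
  coeffVec d (-(MvPolynomial.C (A 1 0)) * substMat A (toForm d f) +
    MvPolynomial.C (A 0 0) * substMat A (toForm d g))

/-- The ideal `Res_R([φ])`: generated by the resultants of all models over `R`
of the form `[F,G]^{(λ,A)}` with `(λ,A) ∈ K^× × GL₂(K)`. -/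
def ResIdeal (R : Type*) {K : Type*} [CommRing R] [Field K] [Algebra R K]
    (d : ℕ) (f g : ℕ → K) : Ideal R :=
  Ideal.span { r : R | ∃ (l : K) (A : Matrix (Fin 2) (Fin 2) K), l ≠ 0 ∧ A.det ≠ 0 ∧
    (∀ i, ∃ a : R, algebraMap R K a = l * FA d f g A i) ∧
    (∀ i, ∃ b : R, algebraMap R K b = l * GA d f g A i) ∧
    algebraMap R K r = sylRes d d (fun i => l * FA d f g A i) (fun i => l * GA d f g A i) }

/-- The ideal `Res_R([φ]₁)`: as `ResIdeal` but with `A` restricted to affine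
(upper-triangular) transformations. -/
def AffResIdeal (R : Type*) {K : Type*} [CommRing R] [Field K] [Algebra R K]
    (d : ℕ) (f g : ℕ → K) : Ideal R :=
  Ideal.span { r : R | ∃ (l : K) (A : Matrix (Fin 2) (Fin 2) K), l ≠ 0 ∧ A.det ≠ 0 ∧ A 1 0 = 0 ∧
    (∀ i, ∃ a : R, algebraMap R K a = l * FA d f g A i) ∧
    (∀ i, ∃ b : R, algebraMap R K b = l * GA d f g A i) ∧
    algebraMap R K r = sylRes d d (fun i => l * FA d f g A i) (fun i => l * GA d f g A i) }



section helpers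
open MvPolynomial

/-- Substitution as an algebra hom. -/
def sg {K : Type*} [CommRing K] (A : Matrix (Fin 2) (Fin 2) K) :
    MvPolynomial (Fin 2) K →ₐ[K] MvPolynomial (Fin 2) K :=
  aeval (fun k => C (A k 0) * X 0 + C (A k 1) * X 1)

lemma substMat_eq {K : Type*} [CommRing K] (A : Matrix (Fin 2) (Fin 2) K) (P) :
    substMat A P = sg A P := rfl

lemma sg_X {K : Type*} [CommRing K] (A : Matrix (Fin 2) (Fin 2) K) (k) :
    sg A (X k) = C (A k 0) * X 0 + C (A k 1) * X 1 := by simp [sg]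

lemma sg_C {K : Type*} [CommRing K] (A : Matrix (Fin 2) (Fin 2) K) (c) :
    sg A (C c) = C c := by simp [sg]

lemma sg_sg {K : Type*} [CommRing K] (A B : Matrix (Fin 2) (Fin 2) K) (P) :
    sg B (sg A P) = sg (A * B) P := by
  have : (sg B).comp (sg A) = sg (A * B) := by
    apply MvPolynomial.algHom_ext
    intro k
    simp only [AlgHom.comp_apply, sg_X, map_add, map_mul, sg_C, Matrix.mul_apply, Fin.sum_univ_two]
    ring
  exact DFunLike.congr_fun this P

lemma sg_one {K : Type*} [CommRing K] (P : MvPolynomial (Fin 2) K) : sg 1 P = P := by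
  have : sg (1 : Matrix (Fin 2) (Fin 2) K) = AlgHom.id K _ := by
    apply MvPolynomial.algHom_ext
    intro k
    fin_cases k <;> simp [sg_X]
  simp [this]

lemma sg_hom {K : Type*} [CommRing K] (A : Matrix (Fin 2) (Fin 2) K) {P n}
    (h : P.IsHomogeneous n) : (sg A P).IsHomogeneous n := by
  have := h.aeval (R := K) (n := 1) (fun k : Fin 2 => (C (A k 0) * X 0 + C (A k 1) * X 1 : MvPolynomial (Fin 2) K)) (fun k => by
    apply IsHomogeneous.add
    · simpa using (isHomogeneous_C (Fin 2) (A k 0)).mul (isHomogeneous_X K (0 : Fin 2))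
    · simpa using (isHomogeneous_C (Fin 2) (A k 1)).mul (isHomogeneous_X K (1 : Fin 2)))
  simpa [sg] using this

lemma sg_map {R K : Type*} [CommRing R] [CommRing K] (f : R →+* K)
    (A : Matrix (Fin 2) (Fin 2) R) (P) : sg (A.map f) (map f P) = map f (sg A P) := by
  induction P using MvPolynomial.induction_on with
  | C a => simp
  | add p q hp hq => simp [hp, hq]
  | mul_X p i hp => simp [hp, sg_X]

/-- Monomials of degree `n-1`. -/
def mon (K : Type*) [CommRing K] (n i : ℕ) : MvPolynomial (Fin 2) K := X 0 ^ (n - 1 - i) * X 1 ^ i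

/-- Exponent. -/
def ex (a b : ℕ) : Fin 2 →₀ ℕ := Finsupp.single 0 a + Finsupp.single 1 b

lemma ex_inj {a b a' b' : ℕ} : ex a b = ex a' b' ↔ a = a' ∧ b = b' := by
  constructor
  · intro h
    have h0 := DFunLike.congr_fun h 0
    have h1 := DFunLike.congr_fun h 1
    simp [ex] at h0 h1
    exact ⟨h0, h1⟩
  · rintro ⟨rfl, rfl⟩; rfl

lemma ex_eq (m : Fin 2 →₀ ℕ) : m = ex (m 0) (m 1) := by
  ext i; fin_cases i <;> simp [ex]

lemma XX_eq {K : Type*} [CommRing K] (a b : ℕ) :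
    (X 0 ^ a * X 1 ^ b : MvPolynomial (Fin 2) K) = monomial (ex a b) 1 := by
  simp [ex, X_pow_eq_monomial, monomial_mul]

lemma coeff_ex_ne {K : Type*} [CommRing K] {P : MvPolynomial (Fin 2) K} {n a b}
    (h : P.IsHomogeneous n) (hab : a + b ≠ n) : coeff (ex a b) P = 0 := by
  apply h.coeff_eq_zero
  simpa [ex, Finsupp.degree_eq_sum] using hab

lemma mon_hom {K : Type*} [CommRing K] {n i : ℕ} (hi : i < n) :
    (mon K n i).IsHomogeneous (n - 1) := by
  have := (isHomogeneous_X_pow (R := K) (0 : Fin 2) (n-1-i)).mul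
    (isHomogeneous_X_pow (R := K) (1 : Fin 2) i)
  rwa [show n - 1 - i + i = n - 1 by omega] at this

/-- coefficient functional -/
def cf {K : Type*} [CommRing K] (n : ℕ) (P : MvPolynomial (Fin 2) K) (j : ℕ) : K :=
  coeff (ex (n - 1 - j) j) P

lemma expand {K : Type*} [CommRing K] {n : ℕ} (hn : 0 < n) {P : MvPolynomial (Fin 2) K}
    (h : P.IsHomogeneous (n - 1)) : P = ∑ k : Fin n, C (cf n P k) * mon K n k := by
  ext m
  rw [ex_eq m, coeff_sum]
  simp only [mon, XX_eq, coeff_C_mul, coeff_monomial, ex_inj, cf]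
  by_cases hm : m 0 + m 1 = n - 1
  · rw [Finset.sum_eq_single ⟨m 1, by omega⟩]
    · have : n - 1 - m 1 = m 0 := by omega
      simp [this]
    · intro b _ hb
      rw [if_neg]
      · simp
      · rintro ⟨_, h2⟩; apply hb; ext; exact h2
    · simp
  · rw [coeff_ex_ne h hm]
    symm
    apply Finset.sum_eq_zero
    intro b _
    rw [if_neg]
    · simp
    · have := b.2
      omega

/-- Symmetric power matrix. -/
def Sm {K : Type*} [CommRing K] (n : ℕ) (A : Matrix (Fin 2) (Fin 2) K) : Matrix (Fin n) (Fin n) K :=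
  Matrix.of fun i j => cf n (sg A (mon K n i)) j

lemma cf_sg {K : Type*} [CommRing K] {n : ℕ} (A : Matrix (Fin 2) (Fin 2) K)
    {P : MvPolynomial (Fin 2) K} (h : P.IsHomogeneous (n - 1)) (j : Fin n) :
    cf n (sg A P) j = ∑ k : Fin n, cf n P k * Sm n A k j := by
  conv_lhs => rw [expand (by have := j.2; omega) h]
  simp only [map_sum, map_mul, sg_C]
  simp only [cf, coeff_sum, coeff_C_mul, Sm, Matrix.of_apply]

lemma Sm_mul {K : Type*} [CommRing K] (n : ℕ) (A B : Matrix (Fin 2) (Fin 2) K) :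
    Sm n (A * B) = Sm n A * Sm n B := by
  ext i j
  rw [Matrix.mul_apply]
  have := cf_sg B (sg_hom A (mon_hom (K := K) i.2)) j
  rw [sg_sg] at this
  exact this

lemma Sm_diag {K : Type*} [CommRing K] (n : ℕ) (a b : K) :
    Sm n !![a, 0; 0, b] = Matrix.diagonal fun i : Fin n => a ^ (n - 1 - (i : ℕ)) * b ^ (i : ℕ) := by
  ext i j
  have : sg !![a, 0; 0, b] (mon K n i) = C (a ^ (n - 1 - (i : ℕ)) * b ^ (i : ℕ)) * mon K n i := by
    simp only [mon, map_mul, map_pow, sg_X]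
    simp
    ring
  simp only [Sm, Matrix.of_apply, this, cf, coeff_C_mul]
  simp only [mon, XX_eq, coeff_monomial, ex_inj, Matrix.diagonal_apply]
  by_cases hij : i = j
  · simp [hij]
  · have : (i : ℕ) ≠ j := fun h => hij (Fin.ext h)
    simp [hij, this]

lemma Sm_one {K : Type*} [CommRing K] (n : ℕ) : Sm n (1 : Matrix (Fin 2) (Fin 2) K) = 1 := by
  have : (1 : Matrix (Fin 2) (Fin 2) K) = !![1, 0; 0, 1] := Matrix.one_fin_two
  rw [this, Sm_diag]
  simp

lemma Sm_diag_det {K : Type*} [CommRing K] (n : ℕ) (a b : K) :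
    (Sm n !![a, 0; 0, b]).det = (a * b) ^ (∑ i ∈ Finset.range n, i) := by
  rw [Sm_diag, Matrix.det_diagonal, Finset.prod_mul_distrib,
    Fin.prod_univ_eq_prod_range (fun i => a ^ (n - 1 - i)) n,
    Fin.prod_univ_eq_prod_range (fun i => b ^ i) n,
    Finset.prod_range_reflect (fun i => a ^ i) n, Finset.prod_pow_eq_pow_sum,
    Finset.prod_pow_eq_pow_sum, mul_pow]

lemma Sm_map {R K : Type*} [CommRing R] [CommRing K] (f : R →+* K) (n : ℕ)
    (A : Matrix (Fin 2) (Fin 2) R) : Sm n (A.map f) = (Sm n A).map f := by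
  ext i j
  have : mon K n i = map f (mon R n i) := by simp [mon]
  simp only [Sm, Matrix.of_apply, Matrix.map_apply, this, sg_map, cf, coeff_map]

lemma Sm_unit {R : Type*} [CommRing R] (n : ℕ) (A : Matrix (Fin 2) (Fin 2) R) (h : IsUnit A.det) :
    IsUnit (Sm n A).det := by
  have h1 : A * A⁻¹ = 1 := Matrix.mul_nonsing_inv A h
  have h2 : (Sm n A).det * (Sm n A⁻¹).det = 1 := by
    rw [← Matrix.det_mul, ← Sm_mul, h1, Sm_one, Matrix.det_one]
  exact IsUnit.of_mul_eq_one _ h2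

/-- Action on models. -/
def act {K : Type*} [CommRing K] (l : K) (A : Matrix (Fin 2) (Fin 2) K)
    (M : Fin 2 → MvPolynomial (Fin 2) K) : Fin 2 → MvPolynomial (Fin 2) K :=
  fun a => ∑ b, C (l * A.adjugate a b) * sg A (M b)

lemma act_act {K : Type*} [CommRing K] (l m : K) (A B : Matrix (Fin 2) (Fin 2) K)
    (M : Fin 2 → MvPolynomial (Fin 2) K) : act m B (act l A M) = act (m * l) (A * B) M := by
  funext a
  simp only [act, map_mul, sg_C, sg_sg, Matrix.adjugate_mul_distrib, Fin.sum_univ_two,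
    Matrix.mul_apply, map_add]
  ring

lemma act_one {K : Type*} [CommRing K]
    (M : Fin 2 → MvPolynomial (Fin 2) K) : act 1 1 M = M := by
  funext a
  fin_cases a <;> simp [act, sg_one]

lemma act_hom {K : Type*} [CommRing K] {d : ℕ} (l : K) (A : Matrix (Fin 2) (Fin 2) K)
    {M : Fin 2 → MvPolynomial (Fin 2) K} (h : ∀ a, (M a).IsHomogeneous d) (a) :
    (act l A M a).IsHomogeneous d := by
  unfold act
  refine IsHomogeneous.sum _ _ _ fun b _ => ?_
  have := (isHomogeneous_C (Fin 2) (l * A.adjugate a b)).mul (sg_hom A (h b))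
  rwa [zero_add] at this

lemma act_map {R K : Type*} [CommRing R] [CommRing K] (f : R →+* K) (l : R)
    (A : Matrix (Fin 2) (Fin 2) R) (M : Fin 2 → MvPolynomial (Fin 2) R) :
    act (f l) (A.map f) (fun a => map f (M a)) = fun a => map f (act l A M a) := by
  funext a
  fin_cases a <;> simp [act, sg_map, Matrix.adjugate_fin_two]

/-- Resultant of a model. -/
def Rs {K : Type*} [CommRing K] (d : ℕ) (M : Fin 2 → MvPolynomial (Fin 2) K) : K :=
  sylRes d d (coeffVec d (M 0)) (coeffVec d (M 1))

/-- Column index. -/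
def ce (d : ℕ) : Fin 2 × Fin d ≃ Fin (d + d) := finProdFinEquiv.trans (finCongr (two_mul d))

lemma ce_zero (d : ℕ) (b : Fin d) : ((ce d (0, b) : Fin (d + d)) : ℕ) = b := by simp [ce]
lemma ce_one (d : ℕ) (b : Fin d) : ((ce d (1, b) : Fin (d + d)) : ℕ) = b + d := by simp [ce]

/-- Sylvester matrix. -/
def Syl {K : Type*} [CommRing K] (d : ℕ) (M : Fin 2 → MvPolynomial (Fin 2) K) :
    Matrix (Fin 2 × Fin d) (Fin 2 × Fin d) K :=
  Matrix.of fun i j => cf (d + d) (mon K d i.2 * M i.1) (ce d j)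

lemma ex_le {a b a' b' : ℕ} : ex a b ≤ ex a' b' ↔ a ≤ a' ∧ b ≤ b' := by
  constructor
  · intro h
    have h0 := h 0
    have h1 := h 1
    simp [ex] at h0 h1
    exact ⟨h0, h1⟩
  · rintro ⟨h, h'⟩ i
    fin_cases i <;> simpa [ex]

lemma ex_sub {a b a' b' : ℕ} : ex a b - ex a' b' = ex (a - a') (b - b') := by
  ext i
  fin_cases i <;> simp [ex]

lemma entry {K : Type*} [CommRing K] (d : ℕ) (P : MvPolynomial (Fin 2) K) (b c : ℕ) (hb : b < d)
    (hc : c < d + d) : cf (d + d) (mon K d b * P) c =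
      if b ≤ c ∧ c ≤ b + d then coeffVec d P (d - (c - b)) else 0 := by
  simp only [cf, mon, XX_eq, coeff_monomial_mul', ex_le, ex_sub, one_mul]
  by_cases h : b ≤ c ∧ c ≤ b + d
  · rw [if_pos h, if_pos (by omega)]
    change _ = coeff (ex _ _) P
    congr 2 <;> omega
  · rw [if_neg h, if_neg (by omega)]

lemma Rs_eq {K : Type*} [CommRing K] (d : ℕ) (M : Fin 2 → MvPolynomial (Fin 2) K) :
    Rs d M = (Syl d M).det := by
  rw [Rs, sylRes, ← Matrix.det_submatrix_equiv_self (ce d)]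
  congr 1
  ext ⟨a, b⟩ j
  have hb := b.2
  simp only [Matrix.submatrix_apply, Matrix.of_apply, Syl]
  rw [entry d _ _ _ b.2 (ce d j).2]
  fin_cases a
  · simp only [Fin.zero_eta, ce_zero]
    rw [if_pos hb]
  · simp only [Fin.mk_one, ce_one]
    rw [if_neg (by omega)]
    simp only [Nat.add_sub_cancel]

open scoped Kronecker in
lemma Rs_act {K : Type*} [CommRing K] {d : ℕ} (l : K) (A : Matrix (Fin 2) (Fin 2) K)
    {M : Fin 2 → MvPolynomial (Fin 2) K} (h : ∀ a, (M a).IsHomogeneous d) :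
    (Sm d A).det ^ 2 * Rs d (act l A M) =
      (l ^ 2 * A.det) ^ d * (Sm (d + d) A).det * Rs d M := by
  have key : ((1 : Matrix (Fin 2) (Fin 2) K) ⊗ₖ Sm d A) * Syl d (act l A M) =
      ((l • A.adjugate) ⊗ₖ (1 : Matrix (Fin d) (Fin d) K)) * Syl d M *
        (Sm (d + d) A).submatrix (ce d) (ce d) := by
    have hS : Syl d M * (Sm (d + d) A).submatrix (ce d) (ce d) =
        Matrix.of fun i j => cf (d + d) (sg A (mon K d i.2 * M i.1)) (ce d j) := by
      ext i j
      have hh : (mon K d i.2 * M i.1).IsHomogeneous (d + d - 1) := by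
        have := (mon_hom (K := K) i.2.2).mul (h i.1)
        have h2 := i.2.2
        rwa [show d - 1 + d = d + d - 1 by omega] at this
      rw [Matrix.of_apply, cf_sg A hh, Matrix.mul_apply, ← Equiv.sum_comp (ce d)]
      rfl
    rw [Matrix.mul_assoc, hS]
    ext ⟨a, b⟩ j
    simp only [Matrix.mul_apply, Matrix.kroneckerMap_apply, Fintype.sum_prod_type, Matrix.of_apply,
      Syl, Matrix.one_apply, Matrix.smul_apply, smul_eq_mul]
    have e1 : sg A (mon K d b) = ∑ k : Fin d, C (Sm d A b k) * mon K d k :=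
      expand (by have := b.2; omega) (sg_hom A (mon_hom b.2))
    simp only [ite_mul, one_mul, zero_mul, mul_ite, mul_one, mul_zero, Finset.sum_ite_eq,
      Finset.mem_univ, if_true, Finset.sum_ite_irrel, Finset.sum_const_zero]
    simp only [map_mul, e1]
    simp only [cf, ← coeff_C_mul, ← coeff_sum, act]
    congr 1
    simp only [Finset.mul_sum, Finset.sum_mul]
    rw [Finset.sum_comm]
    refine Finset.sum_congr rfl fun x _ => Finset.sum_congr rfl fun y _ => ?_
    ring
  have := congrArg Matrix.det key
  rw [Matrix.det_mul, Matrix.det_mul, Matrix.det_mul, Matrix.det_kronecker, Matrix.det_kronecker,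
    Matrix.det_submatrix_equiv_self] at this
  simp only [Matrix.det_one, one_pow, one_mul, mul_one, Fintype.card_fin, Matrix.det_smul,
    Matrix.det_adjugate, ← Rs_eq] at this
  rw [this]
  simp
  ring

lemma diag_formula {K : Type*} [Field K] {d : ℕ} (l a b : K) (ha : a ≠ 0) (hb : b ≠ 0)
    {M : Fin 2 → MvPolynomial (Fin 2) K} (h : ∀ a, (M a).IsHomogeneous d) :
    Rs d (act l !![a, 0; 0, b] M) = l ^ (2 * d) * (a * b) ^ (d + d * d) * Rs d M := by
  have := Rs_act l !![a, 0; 0, b] h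
  rw [Sm_diag_det, Sm_diag_det] at this
  have e : ∑ i ∈ Finset.range (d + d), i =
      (∑ i ∈ Finset.range d, i) * 2 + d * d := by
    rw [Finset.sum_range_add, Finset.sum_add_distrib]; simp; ring
  rw [e] at this
  have hab : (a * b) ^ ((∑ i ∈ Finset.range d, i) * 2) ≠ 0 := pow_ne_zero _ (mul_ne_zero ha hb)
  apply mul_left_cancel₀ hab
  rw [pow_mul, this, Matrix.det_fin_two_of]
  ring

lemma gl_formula {R K : Type*} [CommRing R] [IsDomain R] [Field K] [Algebra R K] {d : ℕ}
    (U : Matrix (Fin 2) (Fin 2) R) (hU : IsUnit U.det)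
    {M : Fin 2 → MvPolynomial (Fin 2) K} (h : ∀ a, (M a).IsHomogeneous d) :
    ∃ u : R, IsUnit u ∧
      Rs d (act 1 (U.map (algebraMap R K)) M) = algebraMap R K u * Rs d M := by
  have := Rs_act 1 (U.map (algebraMap R K)) h
  have e : (U.map (algebraMap R K)).det = algebraMap R K U.det :=
    (RingHom.map_det (algebraMap R K) U).symm
  have e1 : ∀ n, (Sm n (U.map (algebraMap R K))).det = algebraMap R K (Sm n U).det := fun n => by
    rw [Sm_map]; exact (RingHom.map_det (algebraMap R K) _).symm
  rw [e, e1, e1] at this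
  obtain ⟨v, hv⟩ := Sm_unit d U hU
  refine ⟨((v⁻¹ : Rˣ) : R) ^ 2 * (U.det ^ d * (Sm (d + d) U).det), ?_, ?_⟩
  · exact (v⁻¹.isUnit.pow 2).mul ((hU.pow d).mul (Sm_unit _ U hU))
  · have hv' : algebraMap R K ((v⁻¹ : Rˣ) : R) * algebraMap R K (Sm d U).det = 1 := by
      rw [← map_mul, ← hv]; simp
    calc _ = (algebraMap R K ((v⁻¹ : Rˣ) : R) * algebraMap R K (Sm d U).det) ^ 2 *
          Rs d (act 1 (U.map (algebraMap R K)) M) := by rw [hv']; simp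
      _ = algebraMap R K ((v⁻¹ : Rˣ) : R) ^ 2 * (algebraMap R K (Sm d U).det ^ 2 *
          Rs d (act 1 (U.map (algebraMap R K)) M)) := by ring
      _ = _ := by rw [this]; simp only [map_mul, map_pow]; ring

lemma Rs_act_ne {K : Type*} [Field K] {d : ℕ} (l : K) (A : Matrix (Fin 2) (Fin 2) K)
    {M : Fin 2 → MvPolynomial (Fin 2) K} (h : ∀ a, (M a).IsHomogeneous d) (hl : l ≠ 0)
    (hA : A.det ≠ 0) (h0 : Rs d M ≠ 0) : Rs d (act l A M) ≠ 0 := by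
  have := Rs_act l A h
  intro h1
  rw [h1, mul_zero] at this
  have h3 := (Sm_unit (d + d) A hA.isUnit).ne_zero
  have : (l ^ 2 * A.det) ^ d ≠ 0 := by positivity
  simp_all

lemma smithR {R : Type*} [CommRing R] [IsDomain R] [IsPrincipalIdealRing R]
    (A : Matrix (Fin 2) (Fin 2) R) (hA : A.det ≠ 0) :
    ∃ (U V : Matrix (Fin 2) (Fin 2) R) (a : Fin 2 → R), IsUnit U.det ∧ IsUnit V.det ∧
      A = U * Matrix.diagonal a * V := by
  have hinj : Function.Injective A.mulVecLin := by
    rw [← LinearMap.ker_eq_bot, LinearMap.ker_eq_bot']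
    intro v hv
    exact Matrix.eq_zero_of_mulVec_eq_zero hA hv
  let e := LinearEquiv.ofInjective A.mulVecLin hinj
  let c := (Pi.basisFun R (Fin 2)).map e
  obtain ⟨b, a, ab, hab⟩ := Submodule.exists_smith_normal_form_of_rank_eq (Pi.basisFun R (Fin 2))
    (N := LinearMap.range A.mulVecLin) e.finrank_eq.symm
  have hu : ∀ {N : Type _} [AddCommGroup N] [Module R N] (x y : Module.Basis (Fin 2) R N),
      IsUnit (x.toMatrix y).det := fun x y => by
    apply IsUnit.of_mul_eq_one (y.toMatrix x).det
    rw [← Matrix.det_mul, Module.Basis.toMatrix_mul_toMatrix_flip, Matrix.det_one]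
  refine ⟨(Pi.basisFun R (Fin 2)).toMatrix b, ab.toMatrix c, a, hu _ _, hu _ _, ?_⟩
  ext i j
  have h1 : (c j : Fin 2 → R) = A.col j := by
    simp [c, e]
  have h2 := congrArg (fun x : LinearMap.range A.mulVecLin => (x : Fin 2 → R) i) (ab.sum_repr (c j))
  simp only [h1, Submodule.coe_sum, Submodule.coe_smul, hab] at h2
  rw [Matrix.mul_apply]
  simp only [Matrix.mul_diagonal, Module.Basis.toMatrix_apply, Pi.basisFun_repr]
  refine Eq.trans h2.symm ?_
  simp
  ring

lemma smithK {R K : Type*} [CommRing R] [IsDomain R] [IsPrincipalIdealRing R]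
    [Field K] [Algebra R K] [IsFractionRing R K]
    (A : Matrix (Fin 2) (Fin 2) K) (hA : A.det ≠ 0) :
    ∃ (U V : Matrix (Fin 2) (Fin 2) R) (a b : K), IsUnit U.det ∧ IsUnit V.det ∧
      a ≠ 0 ∧ b ≠ 0 ∧
      A = U.map (algebraMap R K) * !![a, 0; 0, b] * V.map (algebraMap R K) := by
  obtain ⟨c, hc⟩ := IsLocalization.exist_integer_multiples (nonZeroDivisors R) Finset.univ
    (fun ij : Fin 2 × Fin 2 => A ij.1 ij.2)
  have hc0 : algebraMap R K c ≠ 0 :=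
    IsFractionRing.to_map_ne_zero_of_mem_nonZeroDivisors c.2
  choose B hB using fun i j => hc (i, j) (Finset.mem_univ _)
  have hB' : (Matrix.of B).map (algebraMap R K) = algebraMap R K c • A := by
    ext i j
    simp [hB, Algebra.smul_def]
  have hBd : (Matrix.of B).det ≠ 0 := by
    intro h
    have : algebraMap R K (Matrix.of B).det = 0 := by rw [h, map_zero]
    rw [RingHom.map_det, RingHom.mapMatrix_apply, hB', Matrix.det_smul] at this
    simp [hA, hc0] at this
  obtain ⟨U, V, a, hU, hV, h⟩ := smithR (Matrix.of B) hBd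
  have ha : a 0 ≠ 0 ∧ a 1 ≠ 0 := by
    rw [h] at hBd
    simp at hBd
    tauto
  refine ⟨U, V, (algebraMap R K c)⁻¹ * algebraMap R K (a 0),
    (algebraMap R K c)⁻¹ * algebraMap R K (a 1), hU, hV, ?_, ?_, ?_⟩
  · simpa [hc0] using ha.1
  · simpa [hc0] using ha.2
  · have h3 : A = (algebraMap R K c)⁻¹ • (Matrix.of B).map (algebraMap R K) := by
      rw [hB', smul_smul, inv_mul_cancel₀ hc0, one_smul]
    rw [h3, h]
    ext i j
    simp [Matrix.mul_apply, Fin.sum_univ_two, Matrix.diagonal_apply]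
    ring

/-- Integrality of a model. -/
def IsInt (R : Type*) {K : Type*} [CommRing R] [Field K] [Algebra R K]
    (M : Fin 2 → MvPolynomial (Fin 2) K) : Prop :=
  ∃ N : Fin 2 → MvPolynomial (Fin 2) R, M = fun a => map (algebraMap R K) (N a)

lemma isInt_iff {R K : Type*} [CommRing R] [Field K] [Algebra R K] {d : ℕ}
    {M : Fin 2 → MvPolynomial (Fin 2) K} (h : ∀ a, (M a).IsHomogeneous d) :
    IsInt R M ↔ ∀ a i, ∃ r, algebraMap R K r = coeffVec d (M a) i := by
  constructor
  · rintro ⟨N, rfl⟩ a i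
    exact ⟨coeffVec d (N a) i, by simp [coeffVec, coeff_map]⟩
  · intro hc
    have : ∀ a, ∃ N, map (algebraMap R K) N = M a := by
      intro a
      change M a ∈ Set.range (map (σ := Fin 2) (algebraMap R K))
      rw [mem_range_map_iff_coeffs_subset]
      intro x hx
      rw [Finset.mem_coe, mem_coeffs_iff] at hx
      obtain ⟨m, hm, rfl⟩ := hx
      have hm' : m 0 + m 1 = d := by
        by_contra hne
        rw [mem_support_iff, ex_eq m] at hm
        exact hm (coeff_ex_ne (h a) hne)
      obtain ⟨r, hr⟩ := hc a (m 0)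
      refine ⟨r, hr.trans ?_⟩
      conv_rhs => rw [ex_eq m]
      change coeff (ex _ _) _ = _
      rw [show d - m 0 = m 1 by omega]
    choose N hN using this
    exact ⟨N, by funext a; exact (hN a).symm⟩

lemma IsInt.act {R K : Type*} [CommRing R] [Field K] [Algebra R K]
    {M : Fin 2 → MvPolynomial (Fin 2) K} (h : IsInt R M) (U : Matrix (Fin 2) (Fin 2) R) :
    IsInt R (act 1 (U.map (algebraMap R K)) M) := by
  obtain ⟨N, rfl⟩ := h
  refine ⟨_root_.act 1 U N, ?_⟩
  rw [← act_map, map_one]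

lemma IsInt.res {R K : Type*} [CommRing R] [Field K] [Algebra R K] (d : ℕ)
    {M : Fin 2 → MvPolynomial (Fin 2) K} (h : IsInt R M) : ∃ r, algebraMap R K r = Rs d M := by
  obtain ⟨N, rfl⟩ := h
  refine ⟨Rs d N, ?_⟩
  rw [Rs_eq, Rs_eq, RingHom.map_det]
  congr 1
  ext i j
  simp [Syl, cf, mon, ← coeff_map]

/-- Units at `p`. -/
def Up {R : Type*} (K : Type*) [CommRing R] [Field K] [Algebra R K] (p : R) (z : K) : Prop :=
  ∃ s t : R, ¬ p ∣ s ∧ ¬ p ∣ t ∧ z * algebraMap R K t = algebraMap R K s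

lemma Up.mul {R K : Type*} [CommRing R] [Field K] [Algebra R K] {p : R} (hp : Prime p) {z w : K}
    (hz : Up K p z) (hw : Up K p w) : Up K p (z * w) := by
  obtain ⟨s, t, hs, ht, h⟩ := hz
  obtain ⟨s', t', hs', ht', h'⟩ := hw
  refine ⟨s * s', t * t', ?_, ?_, ?_⟩
  · intro h; rcases hp.dvd_or_dvd h with h | h <;> contradiction
  · intro h; rcases hp.dvd_or_dvd h with h | h <;> contradiction
  · rw [map_mul, map_mul, ← h, ← h']; ring

lemma Up.pow {R K : Type*} [CommRing R] [Field K] [Algebra R K] {p : R} (hp : Prime p) {z : K}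
    (hz : Up K p z) (n : ℕ) : Up K p (z ^ n) := by
  induction n with
  | zero => exact ⟨1, 1, fun h => hp.not_isUnit (isUnit_of_dvd_one h),
      fun h => hp.not_isUnit (isUnit_of_dvd_one h), by simp⟩
  | succ n ih => rw [pow_succ]; exact ih.mul hp hz

lemma exists_Up {R K : Type*} [CommRing R] [IsDomain R] [IsPrincipalIdealRing R]
    [Field K] [Algebra R K] [IsFractionRing R K] {p : R} (hp : Prime p) (x : K) (hx : x ≠ 0) :
    ∃ (e : ℤ) (z : K), Up K p z ∧ x = algebraMap R K p ^ e * z := by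
  obtain ⟨a, b, hb, rfl⟩ := IsFractionRing.div_surjective (A := R) x
  have hb0 : b ≠ 0 := nonZeroDivisors.ne_zero hb
  have ha0 : a ≠ 0 := by rintro rfl; simp at hx
  obtain ⟨n, a', ha', rfl⟩ := WfDvdMonoid.max_power_factor ha0 hp.irreducible
  obtain ⟨m, b', hb', rfl⟩ := WfDvdMonoid.max_power_factor hb0 hp.irreducible
  have hb'0 : algebraMap R K b' ≠ 0 := by
    simp only [ne_eq, FaithfulSMul.algebraMap_eq_zero_iff]; rintro rfl; simp at hb'
  have hp0 : algebraMap R K p ≠ 0 := by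
    simpa only [ne_eq, FaithfulSMul.algebraMap_eq_zero_iff] using hp.ne_zero
  refine ⟨(n : ℤ) - m, algebraMap R K a' / algebraMap R K b', ⟨a', b', ha', hb', ?_⟩, ?_⟩
  · field_simp
  · rw [zpow_sub₀ hp0, zpow_natCast, zpow_natCast, map_mul, map_mul, map_pow, map_pow]
    field_simp

lemma int_Up {R K : Type*} [CommRing R] [IsDomain R] [IsPrincipalIdealRing R]
    [Field K] [Algebra R K] [IsFractionRing R K] {p : R} (hp : Prime p) (e : ℤ) (z : K)
    (hz : Up K p z) (x y : R) (h : algebraMap R K y = algebraMap R K p ^ e * z * algebraMap R K x) :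
    ∃ r, algebraMap R K r = algebraMap R K p ^ e * algebraMap R K x := by
  have hp0 : algebraMap R K p ≠ 0 := by
    simpa only [ne_eq, FaithfulSMul.algebraMap_eq_zero_iff] using hp.ne_zero
  obtain ⟨n, rfl | rfl⟩ := e.eq_nat_or_neg
  · exact ⟨p ^ n * x, by simp⟩
  · obtain ⟨s, t, hs, ht, hst⟩ := hz
    rw [zpow_neg, zpow_natCast] at h ⊢
    have h1 : y * t * p ^ n = s * x := by
      apply IsFractionRing.injective R K
      simp only [map_mul, map_pow, h, ← hst]
      field_simp
    have h2 : p ^ n ∣ x := hp.pow_dvd_of_dvd_mul_left n hs ⟨y * t, by rw [← h1]; ring⟩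
    obtain ⟨r, rfl⟩ := h2
    refine ⟨r, ?_⟩
    simp only [map_mul, map_pow]
    field_simp

lemma coeff_diag {K : Type*} [CommRing K] {d : ℕ} (a b : K)
    {P : MvPolynomial (Fin 2) K} (h : P.IsHomogeneous d) (i : ℕ) :
    coeffVec d (sg !![a, 0; 0, b] P) i = a ^ i * b ^ (d - i) * coeffVec d P i := by
  change coeff (ex _ _) _ = _ * coeff (ex _ _) _
  by_cases hi : i ≤ d
  · have h1 := cf_sg (n := d + 1) !![a, 0; 0, b] h ⟨d - i, by omega⟩
    rw [Sm_diag] at h1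
    simp only [Matrix.diagonal_apply, mul_ite, mul_zero, Finset.sum_ite_eq', Finset.mem_univ,
      if_true, cf] at h1
    rw [show d + 1 - 1 - (d - i) = i by omega] at h1
    rw [h1]; ring
  · rw [coeff_ex_ne (sg_hom _ h) (by omega), coeff_ex_ne h (by omega), mul_zero]

lemma coeff_act_diag {K : Type*} [CommRing K] {d : ℕ}
    {M : Fin 2 → MvPolynomial (Fin 2) K} (h : ∀ a, (M a).IsHomogeneous d) (x : Fin 2) (i : ℕ) :
    ∃ s t : ℕ, ∀ l a b : K, coeffVec d (act l !![a, 0; 0, b] M x) i =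
      l * a ^ s * b ^ t * coeffVec d (M x) i := by
  have hC : ∀ (c : K) (P : MvPolynomial (Fin 2) K), coeffVec d (C c * P) i = c * coeffVec d P i :=
    fun c P => by simp [coeffVec, coeff_C_mul]
  fin_cases x
  · refine ⟨i, d - i + 1, fun l a b => ?_⟩
    have : act l !![a, 0; 0, b] M 0 = C (l * b) * sg !![a, 0; 0, b] (M 0) := by
      simp [act, Matrix.adjugate_fin_two]
    simp only [Fin.zero_eta, this, hC, coeff_diag a b (h 0)]
    ring
  · refine ⟨i + 1, d - i, fun l a b => ?_⟩
    have : act l !![a, 0; 0, b] M 1 = C (l * a) * sg !![a, 0; 0, b] (M 1) := by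
      simp [act, Matrix.adjugate_fin_two]
    simp only [Fin.mk_one, this, hC, coeff_diag a b (h 1)]
    ring

lemma descent {R K : Type*} [CommRing R] [IsDomain R] [IsPrincipalIdealRing R]
    [Field K] [Algebra R K] [IsFractionRing R K] {d : ℕ}
    {M : Fin 2 → MvPolynomial (Fin 2) K} (h : ∀ a, (M a).IsHomogeneous d) (hM : IsInt R M)
    (l a b : K) (hl : l ≠ 0) (ha : a ≠ 0) (hb : b ≠ 0)
    (hM2 : IsInt R (act l !![a, 0; 0, b] M)) (r1 r2 : R) (hr1 : algebraMap R K r1 = Rs d M)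
    (hr2 : algebraMap R K r2 = Rs d (act l !![a, 0; 0, b] M)) (h0 : r1 ≠ 0) (hn : ¬ r1 ∣ r2) :
    ∃ (l' a' b' : K) (r3 : R), l' ≠ 0 ∧ a' ≠ 0 ∧ b' ≠ 0 ∧ IsInt R (act l' !![a', 0; 0, b'] M) ∧
      algebraMap R K r3 = Rs d (act l' !![a', 0; 0, b'] M) ∧ DvdNotUnit r3 r1 := by
  obtain ⟨u, w, g, hrel, rfl, rfl⟩ := UniqueFactorizationMonoid.exists_reduced_factors r1 h0 r2
  have hg0 : g ≠ 0 := left_ne_zero_of_mul h0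
  have hu0 : u ≠ 0 := right_ne_zero_of_mul h0
  have hu : ¬ IsUnit u := fun hu => hn (mul_dvd_mul_left g hu.dvd)
  obtain ⟨p, hpi, hpu⟩ := WfDvdMonoid.exists_irreducible_factor hu hu0
  have hp : Prime p := hpi.prime
  have hpw : ¬ p ∣ w := fun hw => hp.not_isUnit (hrel hpu hw)
  have hp0 : algebraMap R K p ≠ 0 := by
    simpa only [ne_eq, FaithfulSMul.algebraMap_eq_zero_iff] using hp.ne_zero
  obtain ⟨e1, z1, hz1, rfl⟩ := exists_Up (K := K) hp l hl
  obtain ⟨e2, z2, hz2, rfl⟩ := exists_Up (K := K) hp a ha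
  obtain ⟨e3, z3, hz3, rfl⟩ := exists_Up (K := K) hp b hb
  set q := algebraMap R K p with hq
  have hint : IsInt R (act (q ^ e1) !![q ^ e2, 0; 0, q ^ e3] M) := by
    rw [isInt_iff (act_hom _ _ h)] at hM2 ⊢
    rw [isInt_iff h] at hM
    intro x i
    obtain ⟨s, t, hst⟩ := coeff_act_diag h x i
    obtain ⟨c, hc⟩ := hM x i
    obtain ⟨y, hy⟩ := hM2 x i
    rw [hst, ← hc] at hy
    have := int_Up hp (e1 + e2 * s + e3 * t) (z1 * z2 ^ s * z3 ^ t)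
      ((hz1.mul hp (hz2.pow hp s)).mul hp (hz3.pow hp t)) c y (by
        rw [hy, ← hq, zpow_add₀ hp0, zpow_add₀ hp0, zpow_mul, zpow_mul, zpow_natCast, zpow_natCast]
        ring)
    rw [← hq, zpow_add₀ hp0, zpow_add₀ hp0, zpow_mul, zpow_mul, zpow_natCast, zpow_natCast] at this
    rw [hst, ← hc]
    exact this
  obtain ⟨r3, hr3⟩ := hint.res d
  refine ⟨q ^ e1, q ^ e2, q ^ e3, r3, zpow_ne_zero _ hp0, zpow_ne_zero _ hp0, zpow_ne_zero _ hp0,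
    hint, hr3, ?_⟩
  rw [diag_formula _ _ _ (zpow_ne_zero _ hp0) (zpow_ne_zero _ hp0) h, ← hr1] at hr3
  rw [diag_formula _ _ _ ha hb h, ← hr1] at hr2
  set N1 := 2 * d
  set N2 := d + d * d
  set E : ℤ := e1 * N1 + (e2 + e3) * N2 with hE
  have hqE : (q ^ e1) ^ N1 * (q ^ e2 * q ^ e3) ^ N2 = q ^ E := by
    rw [hE, zpow_add₀ hp0, zpow_mul, zpow_mul, zpow_natCast, zpow_natCast, zpow_add₀ hp0]
  have hZ : Up K p (z1 ^ N1 * (z2 * z3) ^ N2) := (hz1.pow hp _).mul hp ((hz2.mul hp hz3).pow hp _)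
  rw [hqE] at hr3
  have hr2' : algebraMap R K (g * w) =
      q ^ E * (z1 ^ N1 * (z2 * z3) ^ N2) * algebraMap R K (g * u) := by
    rw [hr2, ← hqE]; ring
  obtain ⟨s, t, hs, ht, hst⟩ := hZ
  have hgK : algebraMap R K g ≠ 0 := by
    simpa only [ne_eq, FaithfulSMul.algebraMap_eq_zero_iff] using hg0
  have hr2'' : algebraMap R K (w * t) = q ^ E * algebraMap R K (s * u) := by
    apply mul_left_cancel₀ hgK
    rw [map_mul, map_mul, ← hst]
    rw [map_mul, map_mul] at hr2'
    linear_combination algebraMap R K t * hr2'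
  obtain ⟨n, hn | hn⟩ := E.eq_nat_or_neg
  · exfalso
    rw [hn, zpow_natCast, hq, ← map_pow, ← map_mul] at hr2''
    have h5 := IsFractionRing.injective R K hr2''
    have : p ∣ w * t := h5 ▸ ((hpu.mul_left s).mul_left (p ^ n))
    rcases hp.dvd_or_dvd this with h | h <;> contradiction
  · have hn0 : n ≠ 0 := by
      rintro rfl
      rw [hn] at hr2''
      simp only [Nat.cast_zero, neg_zero, zpow_zero, one_mul] at hr2''
      have h5 := IsFractionRing.injective R K hr2''
      have : p ∣ w * t := h5 ▸ (hpu.mul_left s)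
      rcases hp.dvd_or_dvd this with h | h <;> contradiction
    rw [hn, zpow_neg, zpow_natCast] at hr3
    have h6 : g * u = r3 * p ^ n := by
      apply IsFractionRing.injective R K
      rw [map_mul _ r3, hr3, map_pow, ← hq]
      field_simp
    refine ⟨?_, p ^ n, ?_, h6⟩
    · rintro rfl; simp at h6; tauto
    · rw [isUnit_pow_iff hn0]; exact hp.not_isUnit

lemma descent' {R K : Type*} [CommRing R] [IsDomain R] [IsPrincipalIdealRing R]
    [Field K] [Algebra R K] [IsFractionRing R K] {d : ℕ}
    {M : Fin 2 → MvPolynomial (Fin 2) K} (h : ∀ a, (M a).IsHomogeneous d) (hM : IsInt R M)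
    (l : K) (A : Matrix (Fin 2) (Fin 2) K) (hl : l ≠ 0) (hA : A.det ≠ 0)
    (hM2 : IsInt R (act l A M)) (r1 r2 : R) (hr1 : algebraMap R K r1 = Rs d M)
    (hr2 : algebraMap R K r2 = Rs d (act l A M)) (h0 : r1 ≠ 0) (hn : ¬ r1 ∣ r2) :
    ∃ (l' : K) (A' : Matrix (Fin 2) (Fin 2) K) (r3 : R), l' ≠ 0 ∧ A'.det ≠ 0 ∧
      IsInt R (act l' A' M) ∧
      algebraMap R K r3 = Rs d (act l' A' M) ∧ DvdNotUnit r3 r1 := by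
  obtain ⟨U, V, a, b, hU, hV, ha, hb, rfl⟩ := smithK (R := R) A hA
  obtain ⟨u, hu, hur⟩ := gl_formula (K := K) U hU h
  have hVi : IsUnit (V⁻¹).det := by rwa [Matrix.isUnit_nonsing_inv_det_iff]
  have hVV : V.map (algebraMap R K) * (V⁻¹).map (algebraMap R K) = 1 := by
    rw [← Matrix.map_mul, Matrix.mul_nonsing_inv V hV]; simp
  obtain ⟨v, hv, hvr⟩ := gl_formula (K := K) V⁻¹ hVi
    (act_hom l (U.map (algebraMap R K) * !![a, 0; 0, b] * V.map (algebraMap R K)) h)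
  have hM2' := hM2.act V⁻¹
  have e : act 1 (V⁻¹.map (algebraMap R K))
      (act l (U.map (algebraMap R K) * !![a, 0; 0, b] * V.map (algebraMap R K)) M) =
      act l !![a, 0; 0, b] (act 1 (U.map (algebraMap R K)) M) := by
    rw [act_act, act_act, Matrix.mul_assoc _ (V.map _), hVV]; simp
  rw [e] at hM2' hvr
  obtain ⟨l', a', b', r3, hl', ha', hb', hi, hr3, hd⟩ := descent (act_hom _ _ h) (hM.act U) l a b
    hl ha hb hM2' (u * r1) (v * r2) (by rw [map_mul, hr1, hur]) (by rw [map_mul, hr2, hvr])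
    (mul_ne_zero hu.ne_zero h0) (by
      rw [hu.mul_left_dvd, hv.dvd_mul_left]; exact hn)
  rw [act_act, mul_one] at hi hr3
  have hUd : (U.map (algebraMap R K)).det ≠ 0 := by
    intro h
    simp [h] at hA
  refine ⟨l', _, r3, hl', ?_, hi, hr3, ?_⟩
  · rw [Matrix.det_mul, Matrix.det_fin_two_of]
    simp [hUd, ha', hb']
  · obtain ⟨h3, x, hx, hxe⟩ := hd
    obtain ⟨u', rfl⟩ := hu
    refine ⟨h3, x * (u'⁻¹ : Rˣ), ?_, ?_⟩
    · simpa using hx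
    · rw [← mul_assoc, ← hxe, mul_comm (u' : R), mul_assoc]; simp

lemma toForm_hom {K : Type*} [CommRing K] (d : ℕ) (f : ℕ → K) : (toForm d f).IsHomogeneous d := by
  unfold toForm
  refine IsHomogeneous.sum _ _ _ fun i hi => ?_
  have h1 := ((isHomogeneous_C (Fin 2) (f i)).mul (isHomogeneous_X_pow (R := K) (0 : Fin 2) i)).mul
    (isHomogeneous_X_pow (R := K) (1 : Fin 2) (d - i))
  rw [Finset.mem_range] at hi
  rwa [show 0 + i + (d - i) = d by omega] at h1

lemma coeffVec_toForm {K : Type*} [CommRing K] (d : ℕ) (f : ℕ → K) (hf : ∀ i, d < i → f i = 0) :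
    coeffVec d (toForm d f) = f := by
  funext i
  change coeff (ex _ _) _ = _
  by_cases hi : i ≤ d
  · simp only [toForm, coeff_sum, mul_assoc, coeff_C_mul, XX_eq, coeff_monomial, ex_inj]
    rw [Finset.sum_eq_single i]
    · simp
    · intro b _ hb; simp [hb]
    · intro h; simp at h; omega
  · rw [coeff_ex_ne (toForm_hom d f) (by omega), hf i (by omega)]

lemma FA_eq {K : Type*} [CommRing K] (d : ℕ) (f g : ℕ → K) (l : K)
    (A : Matrix (Fin 2) (Fin 2) K) :
    coeffVec d (act l A ![toForm d f, toForm d g] 0) = fun i => l * FA d f g A i := by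
  funext i
  simp only [FA, coeffVec, ← coeff_C_mul, substMat_eq]
  congr 1
  simp [act, Matrix.adjugate_fin_two]
  ring

lemma GA_eq {K : Type*} [CommRing K] (d : ℕ) (f g : ℕ → K) (l : K)
    (A : Matrix (Fin 2) (Fin 2) K) :
    coeffVec d (act l A ![toForm d f, toForm d g] 1) = fun i => l * GA d f g A i := by
  funext i
  simp only [GA, coeffVec, ← coeff_C_mul, substMat_eq]
  congr 1
  simp [act, Matrix.adjugate_fin_two]
  ring

lemma exists_int {R K : Type*} [CommRing R] [IsDomain R]
    [Field K] [Algebra R K] [IsFractionRing R K] {d : ℕ}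
    {M : Fin 2 → MvPolynomial (Fin 2) K} (h : ∀ a, (M a).IsHomogeneous d) :
    ∃ l : K, l ≠ 0 ∧ IsInt R (act l 1 M) := by
  obtain ⟨c, hc⟩ := IsLocalization.exist_integer_multiples (nonZeroDivisors R) Finset.univ
    (fun ai : Fin 2 × Fin (d + 1) => coeffVec d (M ai.1) ai.2)
  refine ⟨algebraMap R K c, IsFractionRing.to_map_ne_zero_of_mem_nonZeroDivisors c.2, ?_⟩
  have h1 : ∀ a, act (algebraMap R K c) 1 M a = C (algebraMap R K c) * M a := by
    intro a
    fin_cases a <;> simp [act, sg_one]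
  rw [isInt_iff (act_hom _ _ h)]
  intro a i
  by_cases hi : i ≤ d
  · obtain ⟨r, hr⟩ := hc (a, ⟨i, by omega⟩) (Finset.mem_univ _)
    refine ⟨r, ?_⟩
    rw [h1, hr]
    simp [coeffVec, coeff_C_mul, Algebra.smul_def]
  · refine ⟨0, ?_⟩
    rw [map_zero]
    exact (coeff_ex_ne (act_hom _ _ h a) (by omega)).symm

lemma main_aux {R K : Type*} [CommRing R] [IsDomain R] [IsPrincipalIdealRing R]
    [Field K] [Algebra R K] [IsFractionRing R K] {d : ℕ}
    {M : Fin 2 → MvPolynomial (Fin 2) K} (h : ∀ a, (M a).IsHomogeneous d) (h0 : Rs d M ≠ 0) :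
    ∃ (l : K) (A : Matrix (Fin 2) (Fin 2) K) (r : R), l ≠ 0 ∧ A.det ≠ 0 ∧
      IsInt R (act l A M) ∧ algebraMap R K r = Rs d (act l A M) ∧
      ∀ (l' : K) (A' : Matrix (Fin 2) (Fin 2) K) (r' : R), l' ≠ 0 → A'.det ≠ 0 →
        IsInt R (act l' A' M) → algebraMap R K r' = Rs d (act l' A' M) → r ∣ r' := by
  let S : Set R := {r | ∃ (l : K) (A : Matrix (Fin 2) (Fin 2) K), l ≠ 0 ∧ A.det ≠ 0 ∧
    IsInt R (act l A M) ∧ algebraMap R K r = Rs d (act l A M)}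
  have hS : S.Nonempty := by
    obtain ⟨l, hl, hi⟩ := exists_int (R := R) h
    obtain ⟨r, hr⟩ := hi.res d
    exact ⟨r, l, 1, hl, by simp, hi, hr⟩
  have wf : WellFounded (DvdNotUnit (α := R)) := wellFounded_dvdNotUnit
  obtain ⟨r, ⟨l, A, hl, hA, hi, hr⟩, hmin⟩ := wf.has_min S hS
  refine ⟨l, A, r, hl, hA, hi, hr, ?_⟩
  intro l' A' r' hl' hA' hi' hr'
  by_contra hn
  have hr0 : r ≠ 0 := by
    rintro rfl
    rw [map_zero] at hr
    exact Rs_act_ne l A h hl hA h0 hr.symm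
  have hAA : A * (A⁻¹ * A') = A' := by
    rw [← Matrix.mul_assoc, Matrix.mul_nonsing_inv A hA.isUnit, Matrix.one_mul]
  have e : act l' A' M = act (l' * l⁻¹) (A⁻¹ * A') (act l A M) := by
    rw [act_act, hAA, mul_assoc, inv_mul_cancel₀ hl, mul_one]
  have hd' : (A⁻¹ * A').det ≠ 0 := by
    intro h
    rw [← hAA, Matrix.det_mul, h, mul_zero] at hA'
    exact hA' rfl
  rw [e] at hi' hr'
  obtain ⟨m, B, r3, hm, hB, hi3, hr3, hd3⟩ := descent' (act_hom l A h) hi (l' * l⁻¹) (A⁻¹ * A')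
    (mul_ne_zero hl' (inv_ne_zero hl)) hd' hi' r r' hr hr' hr0 hn
  rw [act_act] at hi3 hr3
  exact hmin r3 ⟨_, _, mul_ne_zero hm hl, by rw [Matrix.det_mul]; exact mul_ne_zero hA hB,
    hi3, hr3⟩ hd3

end helpers

/-- Over a PID `R` with fraction field `K`, every rational map of degree
`d ≥ 2` given by a model `[F,G]` over `K` admits an `R`-minimal model: there is
`(λ,A) ∈ K^× × GL₂(K)` such that `[λF_A, λG_A]` has coefficients in `R` and its resultant
generates the ideal `Res_R([φ])`. -/
theorem statement5 {R K : Type*} [CommRing R] [IsDomain R] [IsPrincipalIdealRing R]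
    [Field K] [Algebra R K] [IsFractionRing R K]
    (d : ℕ) (hd : 2 ≤ d) (f g : ℕ → K)
    (hf : ∀ i, d < i → f i = 0) (hg : ∀ i, d < i → g i = 0)
    (hres : sylRes d d f g ≠ 0) :
    ∃ (l : K) (A : Matrix (Fin 2) (Fin 2) K), l ≠ 0 ∧ A.det ≠ 0 ∧
      (∀ i, ∃ a : R, algebraMap R K a = l * FA d f g A i) ∧
      (∀ i, ∃ b : R, algebraMap R K b = l * GA d f g A i) ∧
      (∃ r : R,
        algebraMap R K r =
          sylRes d d (fun i => l * FA d f g A i) (fun i => l * GA d f g A i) ∧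
        ResIdeal R d f g = Ideal.span {r}) := by
  have h : ∀ a, ((![toForm d f, toForm d g] : Fin 2 → MvPolynomial (Fin 2) K) a).IsHomogeneous d := by
    intro a
    fin_cases a
    · exact toForm_hom d f
    · exact toForm_hom d g
  have h0 : Rs d ![toForm d f, toForm d g] ≠ 0 := by
    simpa [Rs, coeffVec_toForm d f hf, coeffVec_toForm d g hg] using hres
  have hR : ∀ l A, Rs d (act l A ![toForm d f, toForm d g]) =
      sylRes d d (fun i => l * FA d f g A i) (fun i => l * GA d f g A i) := by
    intro l A
    rw [Rs, FA_eq, GA_eq]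
  have hI : ∀ l A, IsInt R (act l A ![toForm d f, toForm d g]) ↔
      (∀ i, ∃ a : R, algebraMap R K a = l * FA d f g A i) ∧
      (∀ i, ∃ b : R, algebraMap R K b = l * GA d f g A i) := by
    intro l A
    rw [isInt_iff (act_hom l A h), Fin.forall_fin_two, FA_eq, GA_eq]
  obtain ⟨l, A, r, hl, hA, hi, hr, hmin⟩ := main_aux (R := R) h h0
  rw [hI] at hi
  rw [hR] at hr
  refine ⟨l, A, hl, hA, hi.1, hi.2, r, hr, ?_⟩
  apply le_antisymm
  · unfold ResIdeal
    rw [Ideal.span_le]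
    rintro r' ⟨l', A', hl', hA', h1, h2, h3⟩
    rw [← hR] at h3
    exact Ideal.mem_span_singleton.mpr (hmin l' A' r' hl' hA' ((hI l' A').2 ⟨h1, h2⟩) h3)
  · rw [Ideal.span_singleton_le_iff_mem]
    exact Ideal.subset_span ⟨l, A, hl, hA, hi.1, hi.2, hr⟩

end
end

section
/- Let φ(z) = (7z³ − 41z² − 216z + 180)/(2z³ − z² − 21z + 90), a degree-3 rational map on P¹ over ℚ. Then the model [F,G] with F = 7X³ − 41X²Y − 216XY² + 180Y³ and G = 2X³ − X²Y − 21XY² + 90Y³ is a ℤ-minimal model of [φ], and the first ten points of the forward orbit of 0 under φ are the integers 0, 2, −6, 6, −3, 3, −9, 5, −5, 8; in particular the orbit of 0 contains at least 10 integers. -/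
noncomputable section

lemma coeffVec_toForm_s19 (c : ℕ → ℚ) (i : ℕ) :
    coeffVec 3 (toForm 3 c) i = if i ≤ 3 then c i else 0 := by
  have key : ∀ k : ℕ, MvPolynomial.coeff
      (Finsupp.single (0 : Fin 2) i + Finsupp.single (1 : Fin 2) (3 - i))
      (MvPolynomial.C (c k) * MvPolynomial.X 0 ^ k * MvPolynomial.X 1 ^ (3 - k) :
        MvPolynomial (Fin 2) ℚ) = if k = i then c k else 0 := by
    intro k
    have h1 : (MvPolynomial.C (c k) * MvPolynomial.X 0 ^ k * MvPolynomial.X 1 ^ (3 - k) :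
        MvPolynomial (Fin 2) ℚ) = MvPolynomial.monomial
        (Finsupp.single (0 : Fin 2) k + Finsupp.single (1 : Fin 2) (3 - k)) (c k) := by
      rw [MvPolynomial.X_pow_eq_monomial, MvPolynomial.X_pow_eq_monomial,
        MvPolynomial.C_mul_monomial, MvPolynomial.monomial_mul]
      simp
    rw [h1, MvPolynomial.coeff_monomial]
    by_cases hk : k = i
    · simp [hk]
    · rw [if_neg, if_neg hk]
      intro h
      apply hk
      have := DFunLike.congr_fun h (0 : Fin 2)
      simpa using this
  unfold coeffVec toForm
  rw [MvPolynomial.coeff_sum]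
  simp only [key]
  rw [Finset.sum_ite_eq']
  simp [Nat.lt_succ_iff]

/-- Coefficients of `F ∘ A`. -/
def compCoeff (f : ℕ → ℚ) (a b c d : ℚ) : ℕ → ℚ := fun i =>
  if i = 0 then f 3 * b ^ 3 + f 2 * b ^ 2 * d + f 1 * b * d ^ 2 + f 0 * d ^ 3
  else if i = 1 then f 3 * (3 * a * b ^ 2) + f 2 * (2 * a * b * d + b ^ 2 * c)
    + f 1 * (a * d ^ 2 + 2 * b * c * d) + f 0 * (3 * c * d ^ 2)
  else if i = 2 then f 3 * (3 * a ^ 2 * b) + f 2 * (a ^ 2 * d + 2 * a * b * c)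
    + f 1 * (2 * a * c * d + b * c ^ 2) + f 0 * (3 * c ^ 2 * d)
  else f 3 * a ^ 3 + f 2 * a ^ 2 * c + f 1 * a * c ^ 2 + f 0 * c ^ 3

lemma substMat_toForm (f : ℕ → ℚ) (A : Matrix (Fin 2) (Fin 2) ℚ) :
    substMat A (toForm 3 f) = toForm 3 (compCoeff f (A 0 0) (A 0 1) (A 1 0) (A 1 1)) := by
  simp only [substMat, toForm, compCoeff, Finset.sum_range_succ, Finset.sum_range_zero,
    MvPolynomial.eval₂_add, MvPolynomial.eval₂_mul, MvPolynomial.eval₂_pow,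
    MvPolynomial.eval₂_C, MvPolynomial.eval₂_X, MvPolynomial.eval₂_zero]
  norm_num [MvPolynomial.C_add, MvPolynomial.C_mul, MvPolynomial.C_pow]
  have h2 : (MvPolynomial.C 2 : MvPolynomial (Fin 2) ℚ) = 2 := map_ofNat _ 2
  have h3 : (MvPolynomial.C 3 : MvPolynomial (Fin 2) ℚ) = 3 := map_ofNat _ 3
  simp only [h2, h3]
  ring

lemma toForm_lin (s t : ℚ) (f g : ℕ → ℚ) :
    MvPolynomial.C s * toForm 3 f + MvPolynomial.C t * toForm 3 g
      = toForm 3 (fun i => s * f i + t * g i) := by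
  simp only [toForm, Finset.mul_sum, ← Finset.sum_add_distrib]
  refine Finset.sum_congr rfl fun i _ => ?_
  rw [MvPolynomial.C_add, MvPolynomial.C_mul, MvPolynomial.C_mul]
  ring

lemma FA_eq_s19 (f g : ℕ → ℚ) (A : Matrix (Fin 2) (Fin 2) ℚ) (i : ℕ) :
    FA 3 f g A i = if i ≤ 3 then
      A 1 1 * compCoeff f (A 0 0) (A 0 1) (A 1 0) (A 1 1) i
      + (-A 0 1) * compCoeff g (A 0 0) (A 0 1) (A 1 0) (A 1 1) i else 0 := by
  rw [← coeffVec_toForm_s19 (fun i => A 1 1 * compCoeff f (A 0 0) (A 0 1) (A 1 0) (A 1 1) i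
      + (-A 0 1) * compCoeff g (A 0 0) (A 0 1) (A 1 0) (A 1 1) i), ← toForm_lin, FA,
    substMat_toForm, substMat_toForm, MvPolynomial.C_neg, neg_mul, sub_eq_add_neg]

lemma GA_eq_s19 (f g : ℕ → ℚ) (A : Matrix (Fin 2) (Fin 2) ℚ) (i : ℕ) :
    GA 3 f g A i = if i ≤ 3 then
      (-A 1 0) * compCoeff f (A 0 0) (A 0 1) (A 1 0) (A 1 1) i
      + A 0 0 * compCoeff g (A 0 0) (A 0 1) (A 1 0) (A 1 1) i else 0 := by
  rw [← coeffVec_toForm_s19 (fun i => (-A 1 0) * compCoeff f (A 0 0) (A 0 1) (A 1 0) (A 1 1) i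
      + A 0 0 * compCoeff g (A 0 0) (A 0 1) (A 1 0) (A 1 1) i), ← toForm_lin, GA,
    substMat_toForm, substMat_toForm, MvPolynomial.C_neg]

/-- The Bezout determinant in terms of the 2 by 2 minors of the coefficients. -/
def bez (p01 p02 p03 p12 p13 p23 : ℚ) : ℚ :=
  p01 * ((p03 + p12) * p23 - p13 * p13) - p02 * (p02 * p23 - p13 * p03)
    + p03 * (p02 * p13 - (p03 + p12) * p03)

lemma sylRes_eq (f g : ℕ → ℚ) : sylRes 3 3 f g =
    bez (f 0 * g 1 - f 1 * g 0) (f 0 * g 2 - f 2 * g 0) (f 0 * g 3 - f 3 * g 0)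
      (f 1 * g 2 - f 2 * g 1) (f 1 * g 3 - f 3 * g 1) (f 2 * g 3 - f 3 * g 2) := by
  have h : (Matrix.of fun i j : Fin (3 + 3) =>
      if (i : ℕ) < 3 then
        (if (i : ℕ) ≤ (j : ℕ) ∧ (j : ℕ) ≤ (i : ℕ) + 3 then f (3 - ((j : ℕ) - (i : ℕ))) else 0)
      else
        (if (i : ℕ) - 3 ≤ (j : ℕ) ∧ (j : ℕ) ≤ ((i : ℕ) - 3) + 3 then
          g (3 - ((j : ℕ) - ((i : ℕ) - 3))) else 0)) =
      !![f 3, f 2, f 1, f 0, 0, 0; 0, f 3, f 2, f 1, f 0, 0; 0, 0, f 3, f 2, f 1, f 0;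
         g 3, g 2, g 1, g 0, 0, 0; 0, g 3, g 2, g 1, g 0, 0; 0, 0, g 3, g 2, g 1, g 0] := by
    ext i j
    fin_cases i <;> fin_cases j <;> rfl
  unfold sylRes
  rw [h]
  unfold bez
  simp [Matrix.det_succ_row_zero, Fin.sum_univ_succ, Fin.succAbove]
  ring

lemma bez_scale (t p01 p02 p03 p12 p13 p23 : ℚ) :
    bez (t * p01) (t * p02) (t * p03) (t * p12) (t * p13) (t * p23)
      = t ^ 3 * bez p01 p02 p03 p12 p13 p23 := by
  unfold bez
  ring

lemma minor_scale (l a b c d x y z w : ℚ) :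
    l * (d * x + -b * y) * (l * (-c * z + a * w)) - l * (d * z + -b * w) * (l * (-c * x + a * y))
      = (l ^ 2 * (a * d - b * c)) * (x * w - z * y) := by
  ring

lemma sylRes_transform (f g : ℕ → ℚ) (hf0 : f 0 = 180) (hf1 : f 1 = -216) (hf2 : f 2 = -41)
    (hf3 : f 3 = 7) (hg0 : g 0 = 90) (hg1 : g 1 = -21) (hg2 : g 2 = -1) (hg3 : g 3 = 2)
    (l : ℚ) (A : Matrix (Fin 2) (Fin 2) ℚ) :
    sylRes 3 3 (fun i => l * FA 3 f g A i) (fun i => l * GA 3 f g A i)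
      = (l * A.det ^ 2) ^ 6 * 1333584000 := by
  rw [sylRes_eq, Matrix.det_fin_two]
  simp only [FA_eq_s19, GA_eq_s19]
  norm_num only [if_true]
  simp only [minor_scale, bez_scale]
  norm_num [compCoeff, hf0, hf1, hf2, hf3, hg0, hg1, hg2, hg3]
  generalize A 0 0 = a
  generalize A 0 1 = b
  generalize A 1 0 = c
  generalize A 1 1 = d
  unfold bez
  ring

lemma J_transform (f g : ℕ → ℚ) (hf0 : f 0 = 180) (hf1 : f 1 = -216) (hf2 : f 2 = -41)
    (hf3 : f 3 = 7) (hg0 : g 0 = 90) (hg1 : g 1 = -21) (hg2 : g 2 = -1) (hg3 : g 3 = 2)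
    (l : ℚ) (A : Matrix (Fin 2) (Fin 2) ℚ) :
    (l * FA 3 f g A 2) * (l * GA 3 f g A 1) - (l * FA 3 f g A 1) * (l * GA 3 f g A 2)
     + 3 * ((l * FA 3 f g A 0) * (l * GA 3 f g A 3) - (l * FA 3 f g A 3) * (l * GA 3 f g A 0))
      = (l * A.det ^ 2) ^ 2 * (-165) := by
  rw [Matrix.det_fin_two]
  simp only [FA_eq_s19, GA_eq_s19]
  norm_num [compCoeff, hf0, hf1, hf2, hf3, hg0, hg1, hg2, hg3]
  ring

lemma int_of_sq (u : ℚ) (N : ℤ) (h : (N : ℚ) = u ^ 2 * (-165)) : ∃ k : ℤ, u = k := by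
  have hd : (u.den : ℚ) ≠ 0 := by exact_mod_cast u.den_nz
  have hu : u * u.den = u.num := Rat.mul_den_eq_num u
  have h1 : (N : ℚ) * (u.den : ℚ) ^ 2 = -165 * (u.num : ℚ) ^ 2 := by
    rw [h, ← hu]; ring
  have h2 : N * (u.den : ℤ) ^ 2 = -165 * u.num ^ 2 := by exact_mod_cast h1
  have hc : IsCoprime ((u.den : ℤ) ^ 2) (u.num ^ 2) := by
    apply IsCoprime.pow
    rw [Int.isCoprime_iff_gcd_eq_one, Int.gcd_comm]
    exact u.reduced
  have h3 : (u.den : ℤ) ^ 2 ∣ -165 := by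
    apply hc.dvd_of_dvd_mul_right
    exact ⟨N, by rw [← h2]; ring⟩
  have h4 : u.den ^ 2 ∣ 165 := by
    rw [dvd_neg] at h3
    exact_mod_cast h3
  have h5 : u.den ≤ 12 := by
    have := Nat.le_of_dvd (by norm_num) h4
    nlinarith
  have h6 : u.den = 1 := by
    have h7 := u.den_pos
    generalize u.den = m at h4 h5 h7
    interval_cases m <;> first | rfl | (exfalso; revert h4; decide)
  refine ⟨u.num, ?_⟩
  rw [← hu, h6]; simp



/-- For `φ(z) = (7z³ − 41z² − 216z + 180)/(2z³ − z² − 21z + 90)`, the model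
`[7X³ − 41X²Y − 216XY² + 180Y³, 2X³ − X²Y − 21XY² + 90Y³]` is a `ℤ`-minimal model of `[φ]`,
and the first ten points of the forward orbit of `0` under `φ` are
`0, 2, −6, 6, −3, 3, −9, 5, −5, 8` (with nonvanishing denominators along the way); in
particular the orbit of `0` contains at least `10` integers. -/
theorem statement19 (f g : ℕ → ℚ) (φ : ℚ → ℚ)
    (hfdef : f = fun i => if i = 0 then 180 else if i = 1 then -216 else
      if i = 2 then -41 else if i = 3 then 7 else 0)
    (hgdef : g = fun i => if i = 0 then 90 else if i = 1 then -21 else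
      if i = 2 then -1 else if i = 3 then 2 else 0)
    (hφ : φ = fun z => (7 * z ^ 3 - 41 * z ^ 2 - 216 * z + 180) /
      (2 * z ^ 3 - z ^ 2 - 21 * z + 90)) :
    -- the model is ℤ-minimal
    (∃ r : ℤ, (r : ℚ) = sylRes 3 3 f g ∧ ResIdeal ℤ 3 f g = Ideal.span {r}) ∧
    -- the denominator does not vanish along the initial orbit of 0
    (∀ z ∈ ({0, 2, -6, 6, -3, 3, -9, 5, -5} : Set ℚ),
      2 * z ^ 3 - z ^ 2 - 21 * z + 90 ≠ 0) ∧
    -- the first ten points of the orbit of 0 are integers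
    φ^[0] 0 = 0 ∧ φ^[1] 0 = 2 ∧ φ^[2] 0 = -6 ∧ φ^[3] 0 = 6 ∧ φ^[4] 0 = -3 ∧
    φ^[5] 0 = 3 ∧ φ^[6] 0 = -9 ∧ φ^[7] 0 = 5 ∧ φ^[8] 0 = -5 ∧ φ^[9] 0 = 8 := by
  have hf0 : f 0 = 180 := by simp [hfdef]
  have hf1 : f 1 = -216 := by simp [hfdef]
  have hf2 : f 2 = -41 := by simp [hfdef]
  have hf3 : f 3 = 7 := by simp [hfdef]
  have hg0 : g 0 = 90 := by simp [hgdef]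
  have hg1 : g 1 = -21 := by simp [hgdef]
  have hg2 : g 2 = -1 := by simp [hgdef]
  have hg3 : g 3 = 2 := by simp [hgdef]
  have hS := sylRes_transform f g hf0 hf1 hf2 hf3 hg0 hg1 hg2 hg3
  have hJ := J_transform f g hf0 hf1 hf2 hf3 hg0 hg1 hg2 hg3
  refine ⟨⟨1333584000, ?_, ?_⟩, ?_, ?_⟩
  · rw [sylRes_eq, hf0, hf1, hf2, hf3, hg0, hg1, hg2, hg3]
    norm_num [bez]
  · apply le_antisymm
    · unfold ResIdeal
      rw [Ideal.span_le]
      rintro r ⟨l, A, -, -, hF, hG, hr⟩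
      obtain ⟨a0, ha0⟩ := hF 0
      obtain ⟨a1, ha1⟩ := hF 1
      obtain ⟨a2, ha2⟩ := hF 2
      obtain ⟨a3, ha3⟩ := hF 3
      obtain ⟨b0, hb0⟩ := hG 0
      obtain ⟨b1, hb1⟩ := hG 1
      obtain ⟨b2, hb2⟩ := hG 2
      obtain ⟨b3, hb3⟩ := hG 3
      have hj := hJ l A
      rw [← ha0, ← ha1, ← ha2, ← ha3, ← hb0, ← hb1, ← hb2, ← hb3] at hj
      simp only [algebraMap_int_eq, eq_intCast] at hj hr
      obtain ⟨k, hk⟩ := int_of_sq (l * A.det ^ 2)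
        (a2 * b1 - a1 * b2 + 3 * (a0 * b3 - a3 * b0)) (by push_cast; exact hj)
      rw [hS, hk] at hr
      have hr' : r = k ^ 6 * 1333584000 := by exact_mod_cast hr
      rw [SetLike.mem_coe, Ideal.mem_span_singleton]
      exact ⟨k ^ 6, by rw [hr']; ring⟩
    · rw [Ideal.span_singleton_le_iff_mem]
      apply Ideal.subset_span
      refine ⟨1, 1, one_ne_zero, by simp, ?_, ?_, ?_⟩
      · intro i
        rw [FA_eq_s19]
        by_cases hi : i ≤ 3
        · interval_cases i
          · exact ⟨180, by norm_num [compCoeff, hf0, hf1, hf2, hf3, hg0, hg1, hg2, hg3]⟩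
          · exact ⟨-216, by norm_num [compCoeff, hf0, hf1, hf2, hf3, hg0, hg1, hg2, hg3]⟩
          · exact ⟨-41, by norm_num [compCoeff, hf0, hf1, hf2, hf3, hg0, hg1, hg2, hg3]⟩
          · exact ⟨7, by norm_num [compCoeff, hf0, hf1, hf2, hf3, hg0, hg1, hg2, hg3]⟩
        · exact ⟨0, by simp [hi]⟩
      · intro i
        rw [GA_eq_s19]
        by_cases hi : i ≤ 3
        · interval_cases i
          · exact ⟨90, by norm_num [compCoeff, hf0, hf1, hf2, hf3, hg0, hg1, hg2, hg3]⟩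
          · exact ⟨-21, by norm_num [compCoeff, hf0, hf1, hf2, hf3, hg0, hg1, hg2, hg3]⟩
          · exact ⟨-1, by norm_num [compCoeff, hf0, hf1, hf2, hf3, hg0, hg1, hg2, hg3]⟩
          · exact ⟨2, by norm_num [compCoeff, hf0, hf1, hf2, hf3, hg0, hg1, hg2, hg3]⟩
        · exact ⟨0, by simp [hi]⟩
      · rw [hS]
        simp
  · intro z hz
    simp only [Set.mem_insert_iff, Set.mem_singleton_iff] at hz
    rcases hz with h | h | h | h | h | h | h | h | h <;> rw [h] <;> norm_num
  · subst hφ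
    norm_num [Function.iterate_succ_apply]

end
end
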